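/- arXiv:2406.03955 — 2 statements merged into one kernel-verified Lean document; each statement's English description precedes it below -/
import Mathlib

section
/- In the two-periodic complex over R = K[X,Y]/(XY) one has d_i∘d_{i+1} = 0 for all i ≥ 1; the complex is exact in every positive degree, i.e. ker(d_i) = im(d_{i+1}) for every i ≥ 1 (equivalently, the annihilator of x in R is the ideal (y) and the annihilator of y in R is the ideal (x)); and the image of d_1 is the ideal (x). Hence the two-periodic complex is a free resolution of R/(x) by free R-modules of rank one. -/
/-- the ideal `(XY)` of `K[X,Y]`. -/
noncomputable def xyIdeal (K : Type*) [Field K] : Ideal (MvPolynomial (Fin 2) K) :=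
  Ideal.span {MvPolynomial.X 0 * MvPolynomial.X 1}

/-- the ring `R = K[X,Y]/(XY)`. -/
abbrev TwoPerRing (K : Type*) [Field K] : Type _ :=
  MvPolynomial (Fin 2) K ⧸ xyIdeal K

/-- `x`, the image of `X` in `R`. -/
noncomputable def xcl (K : Type*) [Field K] : TwoPerRing K :=
  Ideal.Quotient.mk (xyIdeal K) (MvPolynomial.X 0)

/-- `y`, the image of `Y` in `R`. -/
noncomputable def ycl (K : Type*) [Field K] : TwoPerRing K :=
  Ideal.Quotient.mk (xyIdeal K) (MvPolynomial.X 1)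

/-- multiplier of the two-periodic differential: `d_i` is multiplication by `y`
if `i` is even, and by `x` if `i` is odd. -/
noncomputable def twoPerMul (K : Type*) [Field K] (i : ℕ) : TwoPerRing K :=
  if Even i then ycl K else xcl K

theorem xcl_mul_ycl (K : Type*) [Field K] : xcl K * ycl K = 0 := by
  unfold xcl ycl
  rw [← map_mul, Ideal.Quotient.eq_zero_iff_mem]
  exact Ideal.subset_span rfl

theorem ann_xcl (K : Type*) [Field K] (r : TwoPerRing K) (h : xcl K * r = 0) :
    ∃ s, ycl K * s = r := by
  obtain ⟨p, rfl⟩ := Ideal.Quotient.mk_surjective r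
  unfold xcl at h
  rw [← map_mul, Ideal.Quotient.eq_zero_iff_mem, xyIdeal, Ideal.mem_span_singleton] at h
  obtain ⟨c, hc⟩ := h
  rw [mul_assoc] at hc
  have := mul_left_cancel₀ (MvPolynomial.X_ne_zero 0) hc
  exact ⟨Ideal.Quotient.mk _ c, by rw [this, map_mul]; rfl⟩

theorem ann_ycl (K : Type*) [Field K] (r : TwoPerRing K) (h : ycl K * r = 0) :
    ∃ s, xcl K * s = r := by
  obtain ⟨p, rfl⟩ := Ideal.Quotient.mk_surjective r
  unfold ycl at h
  rw [← map_mul, Ideal.Quotient.eq_zero_iff_mem, xyIdeal, Ideal.mem_span_singleton] at h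
  obtain ⟨c, hc⟩ := h
  rw [mul_comm (MvPolynomial.X 0), mul_assoc] at hc
  have := mul_left_cancel₀ (MvPolynomial.X_ne_zero 1) hc
  exact ⟨Ideal.Quotient.mk _ c, by rw [this, map_mul]; rfl⟩

theorem twoPerMul_mul_succ (K : Type*) [Field K] (i : ℕ) :
    twoPerMul K i * twoPerMul K (i + 1) = 0 := by
  by_cases hi : Even i
  · simp [twoPerMul, hi, Nat.even_add_one, mul_comm (ycl K), xcl_mul_ycl]
  · simp [twoPerMul, hi, Nat.even_add_one, xcl_mul_ycl]

/-- in the two-periodic complex (`M_i = R` for all `i`, with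
`d_i` multiplication by `y` for even `i` and by `x` for odd `i`):
`d_i ∘ d_{i+1} = 0` for all `i ≥ 1`; the complex is exact in every positive
degree (`ker d_i = im d_{i+1}` for `i ≥ 1`); and the image of `d_1` is the
ideal `(x)`.  Hence it is a free resolution of `R/(x)` by rank-one free
`R`-modules. -/
theorem stmt_5 (K : Type*) [Field K] :
    (∀ i : ℕ, 1 ≤ i → ∀ r : TwoPerRing K,
      twoPerMul K i * (twoPerMul K (i + 1) * r) = 0) ∧
    (∀ i : ℕ, 1 ≤ i → ∀ r : TwoPerRing K,
      twoPerMul K i * r = 0 ↔ ∃ s : TwoPerRing K, twoPerMul K (i + 1) * s = r) ∧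
    (∀ r : TwoPerRing K,
      (∃ s : TwoPerRing K, twoPerMul K 1 * s = r) ↔ r ∈ Ideal.span {xcl K}) := by
  refine ⟨fun i _ r => ?_, fun i _ r => ⟨fun h => ?_, ?_⟩, fun r => ?_⟩
  · rw [← mul_assoc, twoPerMul_mul_succ, zero_mul]
  · by_cases hi : Even i
    · simp only [twoPerMul, hi, Nat.even_add_one, if_true, not_true, if_false] at h ⊢
      exact ann_ycl K r h
    · simp only [twoPerMul, hi, Nat.even_add_one, if_true, not_false_eq_true, if_false] at h ⊢
      exact ann_xcl K r h
  · rintro ⟨s, rfl⟩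
    rw [← mul_assoc, twoPerMul_mul_succ, zero_mul]
  · rw [Ideal.mem_span_singleton]
    simp only [twoPerMul, Nat.not_even_one, if_false]
    exact ⟨fun ⟨s, h⟩ => ⟨s, h.symm⟩, fun ⟨s, h⟩ => ⟨s, h.symm⟩⟩
end

section
/- Let K be a field, R = K[X,Y]/(XY) with x, y the images of X, Y. On the free R-module M = ⨁_{i≥0} R·e_i define the R-bilinear product e_i ⋆ e_j = μ(i,j)·e_{i+j} and the R-linear map d : M → M by d(e_0) = 0, d(e_i) = y·e_{i−1} for i ≥ 2 even, and d(e_i) = x·e_{i−1} for i odd. Then d is a degree −1 derivation of ⋆: for all i, j ≥ 0, d(e_i ⋆ e_j) = d(e_i) ⋆ e_j + (−1)^i e_i ⋆ d(e_j). -/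
/-- the multiplication table `μ(i,j)` of the two-periodic DGA. -/
def muCoef (i j : ℕ) : ℕ :=
  if Even i then
    if Even j then Nat.choose ((i + j) / 2) (j / 2)
    else Nat.choose ((i + j - 1) / 2) ((j - 1) / 2)
  else
    if Even j then Nat.choose ((i + j - 1) / 2) ((i - 1) / 2)
    else 0

/-- the product `e_i ⋆ e_j = μ(i,j) e_{i+j}` on `M = ⨁_{i≥0} R e_i`, extended
`R`-bilinearly. -/
noncomputable def muProd (R : Type*) [CommRing R] :
    (ℕ →₀ R) →ₗ[R] (ℕ →₀ R) →ₗ[R] (ℕ →₀ R) :=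
  Finsupp.lsum R fun i => LinearMap.toSpanSingleton R ((ℕ →₀ R) →ₗ[R] (ℕ →₀ R))
    (Finsupp.lsum R fun j => LinearMap.toSpanSingleton R (ℕ →₀ R)
      ((muCoef i j : R) • Finsupp.single (i + j) (1 : R)))

/-- the two-periodic differential: `d e_0 = 0`, `d e_i = y e_{i−1}` for even
`i ≥ 2`, and `d e_i = x e_{i−1}` for odd `i`, extended `R`-linearly. -/
noncomputable def twoPerD (R : Type*) [CommRing R] (x y : R) :
    (ℕ →₀ R) →ₗ[R] (ℕ →₀ R) :=
  Finsupp.lsum R fun i => LinearMap.toSpanSingleton R (ℕ →₀ R)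
    (if i = 0 then 0
     else (if Even i then y else x) • Finsupp.single (i - 1) (1 : R))

theorem muProd_single (R : Type*) [CommRing R] (i j : ℕ) (a b : R) :
    muProd R (Finsupp.single i a) (Finsupp.single j b) =
      Finsupp.single (i + j) (a * b * (muCoef i j : R)) := by
  simp [muProd, mul_assoc, -Finsupp.single_mul]

theorem twoPerD_zero (R : Type*) [CommRing R] (x y a : R) :
    twoPerD R x y (Finsupp.single 0 a) = 0 := by
  simp [twoPerD]

theorem twoPerD_odd (R : Type*) [CommRing R] (x y a : R) (n : ℕ) :
    twoPerD R x y (Finsupp.single (2 * n + 1) a) = Finsupp.single (2 * n) (a * x) := by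
  simp [twoPerD]

theorem twoPerD_even (R : Type*) [CommRing R] (x y a : R) (n : ℕ) :
    twoPerD R x y (Finsupp.single (2 * n + 2) a) = Finsupp.single (2 * n + 1) (a * y) := by
  have h : Even (2 * n + 2) := ⟨n + 1, by ring⟩
  simp [twoPerD, h]

theorem muCoef_ee (a b : ℕ) : muCoef (2 * a) (2 * b) = (a + b).choose b := by
  have h : (2 * a + 2 * b) / 2 = a + b := by omega
  simp [muCoef, h]

theorem muCoef_eo (a b : ℕ) : muCoef (2 * a) (2 * b + 1) = (a + b).choose b := by
  have h : (2 * a + 2 * b) / 2 = a + b := by omega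
  simp [muCoef, h]

theorem muCoef_oe (a b : ℕ) : muCoef (2 * a + 1) (2 * b) = (a + b).choose b := by
  have h : (2 * a + 1 + 2 * b - 1) / 2 = a + b := by omega
  have h1 : (2 * a + 1 - 1) / 2 = a := by omega
  have h2 : ¬ Even (2 * a + 1) := by simp
  have h3 : Even (2 * b) := by simp
  rw [muCoef, if_neg h2, if_pos h3, h, h1, Nat.choose_symm_add]

theorem muCoef_oo (a b : ℕ) : muCoef (2 * a + 1) (2 * b + 1) = 0 := by
  simp [muCoef]

theorem derivation_aux (R : Type*) [CommRing R] (x y : R) (i j : ℕ) :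
    twoPerD R x y (muProd R (Finsupp.single i 1) (Finsupp.single j 1)) =
      muProd R (twoPerD R x y (Finsupp.single i 1)) (Finsupp.single j 1) +
        (-1 : R) ^ i •
          muProd R (Finsupp.single i 1) (twoPerD R x y (Finsupp.single j 1)) := by
  obtain ⟨a, rfl | rfl⟩ := Nat.even_or_odd' i <;> obtain ⟨b, rfl | rfl⟩ := Nat.even_or_odd' j
  · rcases a with _ | a <;> rcases b with _ | b
    · simp [twoPerD_zero, muProd_single]
    · have h := muCoef_ee 0 (b + 1)
      have h2 := muCoef_eo 0 b
      simp only [mul_zero, mul_add, mul_one, zero_add, Nat.choose_self] at h h2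
      simp [twoPerD_zero, muProd_single, twoPerD_even, mul_add, h, h2]
    · have h := muCoef_ee (a + 1) 0
      have h2 := muCoef_oe a 0
      simp only [mul_zero, mul_add, mul_one, Nat.choose_zero_right] at h h2
      simp [twoPerD_zero, muProd_single, twoPerD_even, mul_add, h, h2]
    · have h := muCoef_ee (a + 1) (b + 1)
      have h2 := muCoef_oe a (b + 1)
      have h3 := muCoef_eo (a + 1) b
      have e1 : 2 * (a + 1) + 2 * (b + 1) = 2 * (a + b + 1) + 2 := by ring
      have e2 : 2 * a + 1 + 2 * (b + 1) = 2 * (a + b + 1) + 1 := by ring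
      have e3 : 2 * (a + 1) + (2 * b + 1) = 2 * (a + b + 1) + 1 := by ring
      have hp : (a + 1 + (b + 1)).choose (b + 1)
          = (a + 1 + b).choose b + (a + (b + 1)).choose (b + 1) := by
        rw [show a + 1 + (b + 1) = (a + 1 + b) + 1 by ring, Nat.choose_succ_succ,
          show a + (b + 1) = a + 1 + b by ring]
      rw [muProd_single, e1, twoPerD_even, show 2 * (a + 1) = 2 * a + 2 by ring, twoPerD_even,
        show 2 * (b + 1) = 2 * b + 2 by ring, twoPerD_even, muProd_single, muProd_single,
        show 2 * a + 2 = 2 * (a + 1) by ring, show 2 * b + 2 = 2 * (b + 1) by ring,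
        h, h2, h3, e2, e3, hp, Finsupp.smul_single, ← Finsupp.single_add]
      congr 1
      rw [pow_mul]
      push_cast
      simp
      ring
  · have e : 2 * a + (2 * b + 1) = 2 * (a + b) + 1 := by ring
    have z : muProd R (twoPerD R x y (Finsupp.single (2 * a) 1))
        (Finsupp.single (2 * b + 1) 1) = 0 := by
      rcases a with _ | a
      · simp [twoPerD_zero]
      · rw [show 2 * (a + 1) = 2 * a + 2 by ring, twoPerD_even, muProd_single, muCoef_oo]
        simp
    rw [z, muProd_single, e, twoPerD_odd, twoPerD_odd, muProd_single, muCoef_eo, muCoef_ee,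
      pow_mul, ← mul_add]
    simp [mul_comm]
  · have e : 2 * a + 1 + 2 * b = 2 * (a + b) + 1 := by ring
    have z : muProd R (Finsupp.single (2 * a + 1) 1)
        (twoPerD R x y (Finsupp.single (2 * b) 1)) = 0 := by
      rcases b with _ | b
      · simp [twoPerD_zero]
      · rw [show 2 * (b + 1) = 2 * b + 2 by ring, twoPerD_even, muProd_single, muCoef_oo]
        simp
    rw [z, muProd_single, e, twoPerD_odd, twoPerD_odd, muProd_single, muCoef_oe, muCoef_ee,
      ← mul_add]
    simp [mul_comm]
  · rw [muProd_single, muCoef_oo, twoPerD_odd, twoPerD_odd, muProd_single, muProd_single,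
      muCoef_eo, muCoef_oe, show 2 * a + (2 * b + 1) = 2 * a + 1 + 2 * b by ring, pow_succ, pow_mul]
    simp

set_option synthInstance.maxHeartbeats 1000000 in
/-- over `R = K[X,Y]/(XY)`, the map `d` is a degree `−1`
derivation of the product `⋆`: for all `i, j ≥ 0`,
`d(e_i ⋆ e_j) = d(e_i) ⋆ e_j + (−1)^i e_i ⋆ d(e_j)`. -/
theorem stmt_7 (K : Type*) [Field K] (i j : ℕ) :
    twoPerD (TwoPerRing K) (xcl K) (ycl K)
        (muProd (TwoPerRing K) (Finsupp.single i 1) (Finsupp.single j 1)) =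
      muProd (TwoPerRing K)
          (twoPerD (TwoPerRing K) (xcl K) (ycl K) (Finsupp.single i 1))
          (Finsupp.single j 1) +
        (-1 : TwoPerRing K) ^ i •
          muProd (TwoPerRing K) (Finsupp.single i 1)
            (twoPerD (TwoPerRing K) (xcl K) (ycl K) (Finsupp.single j 1)) := by
  exact derivation_aux (TwoPerRing K) (xcl K) (ycl K) i j
end
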